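/- In the uncontrolled setting with an irreducible stochastic matrix P and invariant probability μ, the following four conditions are equivalent: (i) the domain D is nonempty; (ii) there exist 1 ≤ i ≠ j ≤ d such that C_{i,j} + C_{j,i} ≥ 0; (iii) ∑_{i=1}^d μ_i c̄_i ≥ 0; (iv) for all 1 ≤ i ≠ j ≤ d, C_{i,j} + C_{j,i} ≥ 0. -/

import Mathlib

open Matrix

/-!
Write `Q = 1 - P`. The `j`-th column of the cost matrix solves the Dirichlet problem
`(Q C_j) i = c i` for `i ≠ j`, `C_j j = 0`; pairing with `μ`, which `Q` annihilates, determines the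
remaining entry: `μ j * (c j - (Q C_j) j) = μ ⬝ᵥ c`. Hence `-C_j` lies in the domain exactly when
`0 ≤ μ ⬝ᵥ c`. Moreover, for `i ≠ j` the function `y = C_j - C_i` is harmonic off `{i, j}`, with
`μ i * (Q y) i = μ ⬝ᵥ c = -(μ j * (Q y) j)`, and `y i - y j = C i j + C j i`. By the maximum
principle the sign of `μ ⬝ᵥ c` decides whether `y` is maximal at `i` or (strictly) at `j`, so
`C i j + C j i` and `μ ⬝ᵥ c` are nonnegative simultaneously.
-/

lemma one_sub_mulVec_apply {ι R : Type*} [Fintype ι] [DecidableEq ι] [NonAssocRing R]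
    (P : Matrix ι ι R) (y : ι → R) (k : ι) : ((1 - P) *ᵥ y) k = y k - ∑ j, P k j * y j := by
  rw [sub_mulVec, one_mulVec]
  rfl

section MaximumPrinciple

variable {ι R : Type*} [Ring R] [LinearOrder R]

lemma forall_of_isIrreducible {A : Matrix ι ι R} (hA : A.IsIrreducible) {p : ι → Prop}
    (hp : ∀ k l, 0 < A k l → p k → p l) {i : ι} (hi : p i) (j : ι) : p j := by
  let := A.toQuiver
  obtain ⟨path, -⟩ := hA.connected i j
  induction path with
  | nil => exact hi
  | cons _ edge ih => exact hp _ _ edge.down ih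

variable [Fintype ι] [DecidableEq ι] [IsStrictOrderedRing R] {P : Matrix ι ι R} {y : ι → R}

lemma eq_of_forall_le_of_one_sub_mulVec_nonpos (hP : P ∈ rowStochastic R ι) {k l : ι}
    (hmax : ∀ j, y j ≤ y k) (hk : ((1 - P) *ᵥ y) k ≤ 0) (hkl : 0 < P k l) : y l = y k := by
  have hterm : ∀ j ∈ Finset.univ, P k j * y j ≤ P k j * y k := fun j _ ↦
    mul_le_mul_of_nonneg_left (hmax j) (nonneg_of_mem_rowStochastic hP)
  have hsum : ∑ j, P k j * y k = y k := by
    rw [← Finset.sum_mul, sum_row_of_mem_rowStochastic hP, one_mul]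
  have hmean : y k ≤ ∑ j, P k j * y j := by
    rwa [one_sub_mulVec_apply, sub_nonpos] at hk
  have heq : ∑ j, P k j * y j = ∑ j, P k j * y k :=
    (Finset.sum_le_sum hterm).antisymm (hsum.trans_le hmean)
  exact mul_left_cancel₀ hkl.ne' ((Finset.sum_eq_sum_iff_of_le hterm).1 heq l (Finset.mem_univ l))

theorem forall_le_of_one_sub_mulVec_nonpos_off (hP : P ∈ rowStochastic R ι)
    (hirr : P.IsIrreducible) {s : Set ι} (hs : s.Nonempty) {a : R} (hbdry : ∀ k ∈ s, y k ≤ a)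
    (hoff : ∀ k ∉ s, ((1 - P) *ᵥ y) k ≤ 0) (k : ι) : y k ≤ a := by
  obtain ⟨j, hj⟩ := hs
  have : Nonempty ι := ⟨j⟩
  obtain ⟨m, hm⟩ := Finite.exists_max y
  refine (hm k).trans ?_
  by_contra! ham
  have hclosed : ∀ k l, 0 < P k l → y k = y m → y l = y m := by
    intro k l hkl hk
    have hks : k ∉ s := fun hks ↦ (hk ▸ hbdry k hks).not_gt ham
    exact (eq_of_forall_le_of_one_sub_mulVec_nonpos hP (hk ▸ hm) (hoff k hks) hkl).trans hk
  have hjm : y j = y m := forall_of_isIrreducible hirr hclosed rfl j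
  exact (hjm ▸ hbdry j hj).not_gt ham

lemma forall_le_apply_of_one_sub_mulVec_nonpos_off (hP : P ∈ rowStochastic R ι)
    (hirr : P.IsIrreducible) {i : ι} (hoff : ∀ k ≠ i, ((1 - P) *ᵥ y) k ≤ 0) (k : ι) :
    y k ≤ y i :=
  forall_le_of_one_sub_mulVec_nonpos_off hP hirr (Set.singleton_nonempty i)
    (fun _ hk ↦ (congrArg y hk).le) hoff k

lemma lt_apply_of_one_sub_mulVec_neg (hP : P ∈ rowStochastic R ι) (hirr : P.IsIrreducible)
    {i j : ι} (hoff : ∀ k ≠ i, ((1 - P) *ᵥ y) k ≤ 0) (hj : ((1 - P) *ᵥ y) j < 0) :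
    y j < y i := by
  have hmax := forall_le_apply_of_one_sub_mulVec_nonpos_off hP hirr hoff
  by_contra! hij
  have hmean : ∑ k, P j k * y k ≤ y j := calc
    ∑ k, P j k * y k ≤ ∑ k, P j k * y j := Finset.sum_le_sum fun k _ ↦
      mul_le_mul_of_nonneg_left ((hmax k).trans hij) (nonneg_of_mem_rowStochastic hP)
    _ = y j := by rw [← Finset.sum_mul, sum_row_of_mem_rowStochastic hP, one_mul]
  rw [one_sub_mulVec_apply, sub_neg] at hj
  exact hj.not_ge hmean

lemma eq_zero_of_one_sub_mulVec_eq_zero_off (hP : P ∈ rowStochastic R ι)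
    (hirr : P.IsIrreducible) {s : Set ι} (hs : s.Nonempty) (hbdry : ∀ k ∈ s, y k = 0)
    (hoff : ∀ k ∉ s, ((1 - P) *ᵥ y) k = 0) : y = 0 := by
  funext k
  refine le_antisymm ?_ (neg_nonpos.1 ?_)
  · exact forall_le_of_one_sub_mulVec_nonpos_off hP hirr hs (fun l hl ↦ (hbdry l hl).le)
      (fun l hl ↦ (hoff l hl).le) k
  · exact forall_le_of_one_sub_mulVec_nonpos_off (y := -y) hP hirr hs
      (fun l hl ↦ by simp [hbdry l hl]) (fun l hl ↦ by simp [mulVec_neg, hoff l hl]) k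

end MaximumPrinciple

section PrincipalSubmatrix

variable {ι κ : Type*} [Fintype ι] [Fintype κ] {f : κ → ι}

lemma submatrix_mulVec_comp {R : Type*} [NonUnitalNonAssocSemiring R] (A : Matrix ι ι R)
    (hf : f.Injective) {x : ι → R} (hx : ∀ i ∉ Set.range f, x i = 0) :
    A.submatrix f f *ᵥ (x ∘ f) = (A *ᵥ x) ∘ f := by
  funext k
  exact Fintype.sum_of_injective f hf _ (fun i ↦ A (f k) i * x i)
    (fun i hi ↦ by rw [hx i hi, mul_zero]) fun _ ↦ rfl

lemma comp_eq_inv_submatrix_mulVec_iff {R : Type*} [CommRing R] [DecidableEq κ]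
    {A : Matrix ι ι R} (hf : f.Injective) (hA : IsUnit (A.submatrix f f).det) {x : ι → R}
    (hx : ∀ i ∉ Set.range f, x i = 0) {b : κ → R} :
    x ∘ f = (A.submatrix f f)⁻¹ *ᵥ b ↔ (A *ᵥ x) ∘ f = b := by
  rw [← submatrix_mulVec_comp A hf hx]
  constructor <;> intro h
  · rw [h, mulVec_mulVec, mul_nonsing_inv _ hA, one_mulVec]
  · rw [← h, mulVec_mulVec, nonsing_inv_mul _ hA, one_mulVec]

lemma det_submatrix_one_sub_ne_zero {R : Type*} [CommRing R] [LinearOrder R]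
    [IsStrictOrderedRing R] [DecidableEq ι] [DecidableEq κ] {P : Matrix ι ι R}
    (hP : P ∈ rowStochastic R ι) (hirr : P.IsIrreducible) (hf : f.Injective)
    (hf' : ¬ f.Surjective) : ((1 - P).submatrix f f).det ≠ 0 := by
  intro hdet
  obtain ⟨v, hv, hQv⟩ := exists_mulVec_eq_zero_iff.2 hdet
  set y : ι → R := Function.extend f v (0 : ι → R)
  have hyf : y ∘ f = v := Function.extend_comp hf v (0 : ι → R)
  have hy : ∀ i ∉ Set.range f, y i = 0 := fun i hi ↦ Function.extend_apply' v (0 : ι → R) i hi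
  have hQy : ((1 - P) *ᵥ y) ∘ f = 0 := by rw [← submatrix_mulVec_comp _ hf hy, hyf, hQv]
  have hy0 : y = 0 := by
    refine eq_zero_of_one_sub_mulVec_eq_zero_off hP hirr
      (Set.nonempty_compl.2 (mt Set.range_eq_univ.1 hf')) hy fun k hk ↦ ?_
    obtain ⟨l, rfl⟩ := not_not.1 hk
    exact congrFun hQy l
  exact hv (by rw [← hyf, hy0, Pi.zero_comp])

end PrincipalSubmatrix

/-- `C` is the cost matrix of the chain with transition matrix `P` and running cost `c`: `C i j` is
the expected total cost, starting from `i`, until `j` is hit. This is encoded by the first-step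
equations `C i j = c i + ∑ l, P i l * C l j` for `i ≠ j`, which need no matrix inverse. -/
structure IsCostMatrix {ι R : Type*} [Fintype ι] [DecidableEq ι] [Ring R] (P : Matrix ι ι R)
    (c : ι → R) (C : Matrix ι ι R) : Prop where
  diag : ∀ j, C j j = 0
  off_diag : ∀ i j, i ≠ j → ((1 - P) * C) i j = c i

/-- The domain `{x | Q x + c ≥ 0}`, where `Q = 1 - P`. -/
def costDomain {ι R : Type*} [Fintype ι] [DecidableEq ι] [Ring R] [LE R] (P : Matrix ι ι R)
    (c : ι → R) : Set (ι → R) :=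
  {x | 0 ≤ (1 - P) *ᵥ x + c}

theorem isCostMatrix_iff_eq_inv_submatrix {K : Type*} [Field K] [LinearOrder K]
    [IsStrictOrderedRing K] {n : ℕ} {P : Matrix (Fin (n + 1)) (Fin (n + 1)) K}
    (hP : P ∈ rowStochastic K (Fin (n + 1))) (hirr : P.IsIrreducible) {c : Fin (n + 1) → K}
    {C : Matrix (Fin (n + 1)) (Fin (n + 1)) K} :
    IsCostMatrix P c C ↔ (∀ j, C j j = 0) ∧ ∀ j k, C (j.succAbove k) j =
      (((1 - P).submatrix j.succAbove j.succAbove)⁻¹ *ᵥ (c ∘ j.succAbove)) k := by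
  have hcol (hdiag : ∀ j, C j j = 0) (j : Fin (n + 1)) :
      C.col j ∘ j.succAbove = ((1 - P).submatrix j.succAbove j.succAbove)⁻¹ *ᵥ (c ∘ j.succAbove) ↔
        ((1 - P) *ᵥ C.col j) ∘ j.succAbove = c ∘ j.succAbove := by
    refine comp_eq_inv_submatrix_mulVec_iff Fin.succAbove_right_injective
      (det_submatrix_one_sub_ne_zero hP hirr Fin.succAbove_right_injective
        fun h ↦ (h j).elim (Fin.succAbove_ne j)).isUnit fun i hi ↦ ?_
    rw [Fin.range_succAbove, Set.notMem_compl_iff, Set.mem_singleton_iff] at hi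
    exact hi ▸ hdiag j
  constructor
  · intro h
    exact ⟨h.diag, fun j ↦ congrFun <| (hcol h.diag j).2 <| funext fun k ↦
      h.off_diag _ _ (Fin.succAbove_ne j k)⟩
  · rintro ⟨hdiag, hinv⟩
    refine ⟨hdiag, fun i j hij ↦ ?_⟩
    obtain ⟨k, rfl⟩ := Fin.exists_succAbove_eq hij
    exact congrFun ((hcol hdiag j).1 (funext (hinv j))) k

section InvariantVector

variable {ι R : Type*} [Fintype ι] [DecidableEq ι] [Ring R] {P : Matrix ι ι R} {c μ : ι → R}
  {C : Matrix ι ι R}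

lemma dotProduct_one_sub_mulVec (hμ : μ ᵥ* P = μ) (x : ι → R) : μ ⬝ᵥ (1 - P) *ᵥ x = 0 := by
  rw [dotProduct_mulVec, vecMul_sub, vecMul_one, hμ, sub_self, zero_dotProduct]

lemma IsCostMatrix.mul_sub_one_sub_mul_diag (hC : IsCostMatrix P c C) (hμ : μ ᵥ* P = μ) (j : ι) :
    μ j * (c j - ((1 - P) * C) j j) = μ ⬝ᵥ c := calc
  μ j * (c j - ((1 - P) * C) j j) = μ ⬝ᵥ (c - (1 - P) *ᵥ C.col j) :=
    (Fintype.sum_eq_single j fun i hij ↦ mul_eq_zero_of_right _ <|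
      sub_eq_zero.2 (hC.off_diag i j hij).symm).symm
  _ = μ ⬝ᵥ c := by rw [dotProduct_sub, dotProduct_one_sub_mulVec hμ, sub_zero]

section PartialOrder

variable [PartialOrder R] [IsOrderedRing R]

lemma dotProduct_nonneg_of_mem_costDomain (hμ : μ ᵥ* P = μ) (hμ0 : 0 ≤ μ) {x : ι → R}
    (hx : x ∈ costDomain P c) : 0 ≤ μ ⬝ᵥ c := calc
  0 ≤ μ ⬝ᵥ ((1 - P) *ᵥ x + c) := dotProduct_nonneg_of_nonneg hμ0 hx
  _ = μ ⬝ᵥ c := by rw [dotProduct_add, dotProduct_one_sub_mulVec hμ, zero_add]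

lemma IsCostMatrix.neg_col_mem_costDomain (hC : IsCostMatrix P c C) {j : ι}
    (hj : ((1 - P) * C) j j ≤ c j) : -C.col j ∈ costDomain P c := by
  intro i
  have hi : ((1 - P) * C) i j ≤ c i := by
    rcases eq_or_ne i j with rfl | hij
    exacts [hj, (hC.off_diag i j hij).le]
  rw [mulVec_neg]
  exact le_neg_add_iff_le.2 hi

end PartialOrder

variable [LinearOrder R] [IsStrictOrderedRing R]

lemma IsCostMatrix.one_sub_mul_diag_le_iff (hC : IsCostMatrix P c C) (hμ : μ ᵥ* P = μ) {j : ι}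
    (hj : 0 < μ j) : ((1 - P) * C) j j ≤ c j ↔ 0 ≤ μ ⬝ᵥ c := by
  rw [← hC.mul_sub_one_sub_mul_diag hμ j, mul_nonneg_iff_of_pos_left hj, sub_nonneg]

theorem IsCostMatrix.nonempty_costDomain_iff [Nonempty ι] (hC : IsCostMatrix P c C)
    (hμ : μ ᵥ* P = μ) (hμpos : ∀ i, 0 < μ i) : (costDomain P c).Nonempty ↔ 0 ≤ μ ⬝ᵥ c := by
  constructor
  · rintro ⟨x, hx⟩
    exact dotProduct_nonneg_of_mem_costDomain hμ (fun i ↦ (hμpos i).le) hx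
  · intro h
    obtain ⟨j⟩ := ‹Nonempty ι›
    exact ⟨_, hC.neg_col_mem_costDomain ((hC.one_sub_mul_diag_le_iff hμ (hμpos j)).2 h)⟩

end InvariantVector

section RoundTripCost

lemma mulVec_col_sub_col_apply {l m n R : Type*} [Fintype m] [NonUnitalNonAssocRing R]
    (A : Matrix l m R) (B : Matrix m n R) (i j : n) (k : l) :
    (A *ᵥ (B.col j - B.col i)) k = (A * B) k j - (A * B) k i := by
  rw [mulVec_sub]
  rfl

variable {ι R : Type*} [Fintype ι] [DecidableEq ι] [Ring R] [LinearOrder R]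
  [IsStrictOrderedRing R] {P : Matrix ι ι R} {c μ : ι → R} {C : Matrix ι ι R}

lemma IsCostMatrix.add_swap_nonneg_of_le (hC : IsCostMatrix P c C) (hP : P ∈ rowStochastic R ι)
    (hirr : P.IsIrreducible) (i : ι) {j : ι} (hj : ((1 - P) * C) j j ≤ c j) :
    0 ≤ C i j + C j i := by
  have hle : C j j - C j i ≤ C i j - C i i := by
    refine forall_le_apply_of_one_sub_mulVec_nonpos_off (y := C.col j - C.col i) hP hirr
      (fun k hki ↦ ?_) j
    rw [mulVec_col_sub_col_apply, hC.off_diag k i hki, sub_nonpos]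
    rcases eq_or_ne k j with rfl | hkj
    exacts [hj, (hC.off_diag k j hkj).le]
  rw [hC.diag, hC.diag, zero_sub, sub_zero] at hle
  exact neg_le_iff_add_nonneg.1 hle

lemma IsCostMatrix.add_swap_neg_of_lt (hC : IsCostMatrix P c C) (hP : P ∈ rowStochastic R ι)
    (hirr : P.IsIrreducible) {i j : ι} (hij : i ≠ j) (hi : c i < ((1 - P) * C) i i) :
    C i j + C j i < 0 := by
  have hlt : C i j - C i i < C j j - C j i := by
    refine lt_apply_of_one_sub_mulVec_neg (y := C.col j - C.col i) hP hirr (fun k hkj ↦ ?_) ?_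
    · rw [mulVec_col_sub_col_apply, hC.off_diag k j hkj, sub_nonpos]
      rcases eq_or_ne k i with rfl | hki
      exacts [hi.le, (hC.off_diag k i hki).ge]
    · rwa [mulVec_col_sub_col_apply, hC.off_diag i j hij, sub_neg]
  rw [hC.diag, hC.diag, zero_sub, sub_zero] at hlt
  exact lt_neg_iff_add_neg.1 hlt

theorem IsCostMatrix.add_swap_nonneg_iff (hC : IsCostMatrix P c C) (hP : P ∈ rowStochastic R ι)
    (hirr : P.IsIrreducible) (hμ : μ ᵥ* P = μ) (hμpos : ∀ i, 0 < μ i) {i j : ι} (hij : i ≠ j) :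
    0 ≤ C i j + C j i ↔ 0 ≤ μ ⬝ᵥ c := by
  constructor
  · rw [← hC.one_sub_mul_diag_le_iff hμ (hμpos i)]
    contrapose!
    exact hC.add_swap_neg_of_lt hP hirr hij
  · rw [← hC.one_sub_mul_diag_le_iff hμ (hμpos j)]
    exact hC.add_swap_nonneg_of_le hP hirr i

end RoundTripCost

theorem nonempty_domain_tfae_general {ι R : Type*} [Fintype ι] [DecidableEq ι] [Nontrivial ι]
    [Ring R] [LinearOrder R] [IsStrictOrderedRing R] {P C : Matrix ι ι R} {c μ : ι → R}
    (hP : P ∈ rowStochastic R ι) (hirr : P.IsIrreducible) (hμ : μ ᵥ* P = μ)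
    (hμpos : ∀ i, 0 < μ i) (hC : IsCostMatrix P c C) :
    [(costDomain P c).Nonempty,
      ∃ i j, i ≠ j ∧ 0 ≤ C i j + C j i,
      0 ≤ μ ⬝ᵥ c,
      ∀ i j, i ≠ j → 0 ≤ C i j + C j i].TFAE := by
  have hround {i j : ι} (hij : i ≠ j) : 0 ≤ C i j + C j i ↔ 0 ≤ μ ⬝ᵥ c :=
    hC.add_swap_nonneg_iff hP hirr hμ hμpos hij
  tfae_have 1 ↔ 3 := hC.nonempty_costDomain_iff hμ hμpos
  tfae_have 2 → 3 := fun ⟨_, _, hij, h⟩ ↦ (hround hij).1 h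
  tfae_have 3 → 4 := fun h _ _ hij ↦ (hround hij).2 h
  tfae_have 4 → 2 := fun h ↦
    let ⟨i, j, hij⟩ := exists_pair_ne ι
    ⟨i, j, hij, h i j hij⟩
  tfae_finish

/-- Uncontrolled setting with an irreducible stochastic matrix `P`
(`d = n + 2`), invariant probability `μ`, cost vector `c̄`, cost matrix `C` and
domain `D`.  The following are equivalent:
(i) `D` is nonempty;
(ii) `∃ i ≠ j, C i j + C j i ≥ 0`;
(iii) `∑ i, μ i * c̄ i ≥ 0`;
(iv) `∀ i ≠ j, C i j + C j i ≥ 0`. -/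
theorem nonempty_domain_tfae
    (n : ℕ)
    (P : Matrix (Fin (n + 2)) (Fin (n + 2)) ℝ)
    (c : Fin (n + 2) → ℝ) (μ : Fin (n + 2) → ℝ)
    (hP0 : ∀ i j, 0 ≤ P i j)
    (hP1 : ∀ i, ∑ j, P i j = 1)
    (hirr : ∀ i j, ∃ k : ℕ, 1 ≤ k ∧ 0 < (P ^ k) i j)
    (hμpos : ∀ i, 0 < μ i)
    (hμsum : ∑ i, μ i = 1)
    (hμinv : ∀ j, ∑ i, μ i * P i j = μ j)
    (C : Fin (n + 2) → Fin (n + 2) → ℝ)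
    (hCdiag : ∀ j, C j j = 0)
    (hCoff : ∀ (j : Fin (n + 2)) (k : Fin (n + 1)),
      C (j.succAbove k) j =
        (((1 - P).submatrix j.succAbove j.succAbove)⁻¹ *ᵥ fun l => c (j.succAbove l)) k)
    (D : Set (Fin (n + 2) → ℝ))
    (hD : D = {x | ∀ i, (∑ j, P i j * x j) - c i ≤ x i}) :
    [D.Nonempty,
      ∃ i j : Fin (n + 2), i ≠ j ∧ 0 ≤ C i j + C j i,
      0 ≤ ∑ i, μ i * c i,
      ∀ i j : Fin (n + 2), i ≠ j → 0 ≤ C i j + C j i].TFAE := by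
  have hP : P ∈ rowStochastic ℝ (Fin (n + 2)) := mem_rowStochastic_iff_sum.2 ⟨hP0, hP1⟩
  have hPirr : P.IsIrreducible := (isIrreducible_iff_exists_pow_pos hP0).2 hirr
  have hC : IsCostMatrix P c C :=
    (isCostMatrix_iff_eq_inv_submatrix hP hPirr).2 ⟨hCdiag, hCoff⟩
  have hdom : D = costDomain P c := by
    ext x
    simp [hD, costDomain, Pi.le_def, one_sub_mulVec_apply, sub_add, sub_nonneg]
  rw [hdom]
  exact nonempty_domain_tfae_general hP hPirr (funext hμinv) hμpos hC
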